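/- arXiv:0905.0944 — 2 statements merged into one kernel-verified Lean document; each statement's English description precedes it below -/
import Mathlib

section
/- Let ρ = Σᵢ λᵢ Pᵢ be a density operator on a separable Hilbert space (λᵢ > 0, Σλᵢ = 1, Pᵢ orthogonal rank-one projections) and let A be a nonzero bounded self-adjoint operator with Tr(ρA) = 0. Then for every ε > 0 there exists a density operator σ with Tr|σ − ρ| < ε and Tr(σA) ≠ 0. -/
open scoped InnerProductSpace

variable {H : Type*} [NormedAddCommGroup H] [InnerProductSpace ℂ H] [CompleteSpace H]

/-- `ζ` is orthonormal at all indices where the coefficient `l` is nonzero. -/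
def OrthonormalOnSupport (l : ℕ → ℝ) (ζ : ℕ → H) : Prop :=
  ∀ m n, l m ≠ 0 → l n ≠ 0 → ⟪ζ m, ζ n⟫_ℂ = if m = n then 1 else 0

/-- The diagonal operator `∑ₙ lₙ ⟨·, ζₙ⟩ ζₙ` applied to `x`. -/
noncomputable def diagApply (l : ℕ → ℝ) (ζ : ℕ → H) (x : H) : H :=
  ∑' n, ((l n : ℂ) * ⟪ζ n, x⟫_ℂ) • ζ n

/-- `(p, ζ)` is the canonical (diagonal) representation of a density operator:
`ρ = ∑ₙ pₙ ⟨·, ζₙ⟩ ζₙ` with `pₙ ≥ 0`, `∑ pₙ = 1` and `{ζₙ}` orthonormal. -/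
def IsDensityRep (p : ℕ → ℝ) (ζ : ℕ → H) : Prop :=
  (∀ n, 0 ≤ p n) ∧ Summable p ∧ (∑' n, p n) = 1 ∧ OrthonormalOnSupport p ζ

/-- `(m, η)` is a canonical (diagonal) representation of the self-adjoint trace-class
difference `σ - ρ` of the operators represented by `(q, ξ)` and `(p, ζ)`; its trace norm is
`∑ₙ |mₙ|`. -/
def IsDiffRep (q : ℕ → ℝ) (ξ : ℕ → H) (p : ℕ → ℝ) (ζ : ℕ → H)
    (m : ℕ → ℝ) (η : ℕ → H) : Prop :=
  (Summable fun n => |m n|) ∧ OrthonormalOnSupport m η ∧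
    ∀ x : H, diagApply q ξ x - diagApply p ζ x = diagApply m η x

/-- The trace `Tr(ρ A) = ∑ₙ pₙ ⟨A ζₙ, ζₙ⟩` (real, since `A` is self-adjoint) of `ρ A`,
for `ρ` given by the density representation `(p, ζ)`. -/
noncomputable def trFor (A : H →L[ℂ] H) (p : ℕ → ℝ) (ζ : ℕ → H) : ℝ :=
  ∑' n, p n * (⟪A (ζ n), ζ n⟫_ℂ).re

set_option linter.unusedSectionVars false

/-- `ζ` is orthonormal at all indices in `S`. -/
def OrthonormalAt (S : Set ℕ) (ζ : ℕ → H) : Prop :=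
  ∀ m ∈ S, ∀ n ∈ S, ⟪ζ m, ζ n⟫_ℂ = if m = n then 1 else 0

/-- There is a density operator `ε`-close in trace norm to the one represented by `(p, ζ)`, at
which the expectation of `A` does not vanish. -/
def HasPerturbation (A : H →L[ℂ] H) (p : ℕ → ℝ) (ζ : ℕ → H) (ε : ℝ) : Prop :=
  ∃ (q : ℕ → ℝ) (ξ : ℕ → H) (m : ℕ → ℝ) (η : ℕ → H),
    IsDensityRep q ξ ∧ IsDiffRep q ξ p ζ m η ∧ (∑' n, |m n|) < ε ∧ trFor A q ξ ≠ 0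

theorem HasPerturbation.congr {A : H →L[ℂ] H} {p p' : ℕ → ℝ} {ζ ζ' : ℕ → H} {ε : ℝ}
    (h : HasPerturbation A p ζ ε) (hd : ∀ x, diagApply p ζ x = diagApply p' ζ' x) :
    HasPerturbation A p' ζ' ε := by
  obtain ⟨q, ξ, m, η, h1, ⟨h2, h3, h4⟩, h5, h6⟩ := h
  exact ⟨q, ξ, m, η, h1, ⟨h2, h3, fun x => by rw [← hd, h4]⟩, h5, h6⟩

theorem OrthonormalAt.onSupport {S : Set ℕ} {ζ : ℕ → H} (h : OrthonormalAt S ζ) {l : ℕ → ℝ}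
    (hl : ∀ n, l n ≠ 0 → n ∈ S) : OrthonormalOnSupport l ζ :=
  fun m n hm hn => h m (hl m hm) n (hl n hn)

theorem OrthonormalAt.norm_eq_one {S : Set ℕ} {ζ : ℕ → H} (h : OrthonormalAt S ζ) {n : ℕ}
    (hn : n ∈ S) : ‖ζ n‖ = 1 := by
  have h1 := h n hn n hn
  rw [if_pos rfl, inner_self_eq_norm_sq_to_K] at h1
  have h2 : ‖ζ n‖ ^ 2 = 1 := Complex.ofReal_injective (by push_cast; exact h1)
  nlinarith [norm_nonneg (ζ n)]

theorem summable_diagApply {S : Set ℕ} {ζ : ℕ → H} (h : OrthonormalAt S ζ) {l : ℕ → ℝ}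
    (hl : ∀ n, l n ≠ 0 → n ∈ S) (hs : Summable fun n => |l n|) (x : H) :
    Summable fun n => ((l n : ℂ) * ⟪ζ n, x⟫_ℂ) • ζ n := by
  refine Summable.of_norm_bounded (hs.mul_right ‖x‖) fun n => ?_
  by_cases h0 : l n = 0
  · simp [h0]
  · have h1 := h.norm_eq_one (hl n h0)
    have h2 := norm_inner_le_norm (𝕜 := ℂ) (ζ n) x
    rw [h1, one_mul] at h2
    rw [norm_smul, norm_mul, h1, mul_one, Complex.norm_real, Real.norm_eq_abs]
    gcongr

theorem summable_trFor (A : H →L[ℂ] H) {S : Set ℕ} {ζ : ℕ → H} (h : OrthonormalAt S ζ)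
    {l : ℕ → ℝ} (hl : ∀ n, l n ≠ 0 → n ∈ S) (hs : Summable fun n => |l n|) :
    Summable fun n => l n * (⟪A (ζ n), ζ n⟫_ℂ).re := by
  refine Summable.of_norm_bounded (hs.mul_right ‖A‖) fun n => ?_
  by_cases h0 : l n = 0
  · simp [h0]
  · have h1 := h.norm_eq_one (hl n h0)
    have h2 := norm_inner_le_norm (𝕜 := ℂ) (A (ζ n)) (ζ n)
    have h3 := A.le_opNorm (ζ n)
    rw [h1, mul_one] at h2 h3
    rw [norm_mul, Real.norm_eq_abs, Real.norm_eq_abs]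
    gcongr
    exact (Complex.abs_re_le_norm _).trans (h2.trans h3)

/-- Mixing in a little of an eigenprojection on which `A` has nonzero expectation. -/
theorem hasPerturbation_of_diag_ne_zero {A : H →L[ℂ] H} {p : ℕ → ℝ} {ζ : ℕ → H} {S : Set ℕ}
    (hS : OrthonormalAt S ζ) (hp0 : ∀ n, 0 ≤ p n) (hps : Summable p) (hp1 : ∑' n, p n = 1)
    (hpS : ∀ n, p n ≠ 0 → n ∈ S) (htr : trFor A p ζ = 0) {i : ℕ} (hi : i ∈ S)
    (hne : (⟪A (ζ i), ζ i⟫_ℂ).re ≠ 0) {ε : ℝ} (hε : 0 < ε) : HasPerturbation A p ζ ε := by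
  obtain ⟨t, ht0, ht1, htε⟩ : ∃ t : ℝ, 0 < t ∧ t ≤ 1 ∧ 2 * t < ε :=
    ⟨min 1 (ε / 4), by positivity, min_le_left _ _, by linarith [min_le_right 1 (ε / 4)]⟩
  have hδ : HasSum (fun n => if n = i then (1 : ℝ) else 0) 1 := hasSum_ite_eq i 1
  have hp : HasSum p 1 := hp1 ▸ hps.hasSum
  set q : ℕ → ℝ := fun n => (1 - t) * p n + t * (if n = i then 1 else 0) with hq
  set m : ℕ → ℝ := fun n => t * ((if n = i then 1 else 0) - p n) with hm
  have hqs : HasSum q 1 := by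
    have := (hp.mul_left (1 - t)).add (hδ.mul_left t)
    rwa [mul_one, mul_one, sub_add_cancel] at this
  have hq0 : ∀ n, 0 ≤ q n := fun n => by
    have : (0 : ℝ) ≤ if n = i then 1 else 0 := by split_ifs <;> norm_num
    have := mul_nonneg (sub_nonneg.2 ht1) (hp0 n)
    have : 0 ≤ t * (if n = i then (1 : ℝ) else 0) := by positivity
    simp only [hq]; linarith
  have hmem : ∀ l : ℕ → ℝ, (∀ n, n ≠ i → p n = 0 → l n = 0) → ∀ n, l n ≠ 0 → n ∈ S := by
    intro l hl n hn
    by_cases hni : n = i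
    · exact hni ▸ hi
    · exact hpS n fun h => hn (hl n hni h)
  have hqS : ∀ n, q n ≠ 0 → n ∈ S := hmem q fun n h1 h2 => by simp [hq, h1, h2]
  have hmS : ∀ n, m n ≠ 0 → n ∈ S := hmem m fun n h1 h2 => by simp [hm, h1, h2]
  have hb : HasSum (fun n => t * ((if n = i then (1 : ℝ) else 0) + p n)) (t * (1 + 1)) :=
    (hδ.add hp).mul_left t
  have hmb : ∀ n, |m n| ≤ t * ((if n = i then (1 : ℝ) else 0) + p n) := fun n => by
    have h1 : (0 : ℝ) ≤ if n = i then 1 else 0 := by split_ifs <;> norm_num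
    rw [hm, abs_mul, abs_of_pos ht0]
    gcongr
    rw [abs_le]
    constructor <;> linarith [hp0 n]
  have hms : Summable fun n => |m n| := Summable.of_nonneg_of_le (fun _ => abs_nonneg _) hmb hb.summable
  refine ⟨q, ζ, m, ζ, ⟨hq0, hqs.summable, hqs.tsum_eq, hS.onSupport hqS⟩,
    ⟨hms, hS.onSupport hmS, fun x => ?_⟩, ?_, ?_⟩
  · rw [diagApply, diagApply, ← (summable_diagApply hS hqS hqs.summable.abs x).tsum_sub
      (summable_diagApply hS hpS hps.abs x), diagApply]
    refine tsum_congr fun n => ?_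
    rw [← sub_smul, ← sub_mul, ← Complex.ofReal_sub]
    congr 4
    simp only [hq, hm]; ring
  · calc ∑' n, |m n| ≤ t * (1 + 1) := hasSum_le hmb hms.hasSum hb
      _ < ε := by linarith
  · have h1 : HasSum (fun n => p n * (⟪A (ζ n), ζ n⟫_ℂ).re) 0 :=
      htr ▸ (summable_trFor A hS hpS hps.abs).hasSum
    have h2 := (h1.mul_left (1 - t)).add
      ((hasSum_ite_eq i (⟪A (ζ i), ζ i⟫_ℂ).re).mul_left t)
    have h3 : trFor A q ζ = t * (⟪A (ζ i), ζ i⟫_ℂ).re := by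
      rw [trFor, ← zero_add (t * _), ← mul_zero (1 - t), ← h2.tsum_eq]
      refine tsum_congr fun n => ?_
      simp only [hq]
      split_ifs with h
      · rw [h]; ring
      · ring
    rw [h3]
    exact mul_ne_zero ht0.ne' hne

/-- The family `ζ` with the pair `(ζ i, ζ j)` rotated by the matrix `(c, s; -s, c)`. -/
noncomputable def rotatePair (c s : ℝ) (i j : ℕ) (ζ : ℕ → H) : ℕ → H := fun n =>
  if n = i then (c : ℂ) • ζ i + (s : ℂ) • ζ j
  else if n = j then (-s : ℂ) • ζ i + (c : ℂ) • ζ j else ζ n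

theorem OrthonormalAt.rotatePair {S : Set ℕ} {ζ : ℕ → H} (h : OrthonormalAt S ζ) {c s : ℝ}
    (hcs : c ^ 2 + s ^ 2 = 1) {i j : ℕ} (hi : i ∈ S) (hj : j ∈ S) (hij : i ≠ j) :
    OrthonormalAt S (rotatePair c s i j ζ) := by
  have hcs' : (c : ℂ) ^ 2 + (s : ℂ) ^ 2 = 1 := by exact_mod_cast hcs
  intro m hm n hn
  have hii := h i hi i hi
  have hjj := h j hj j hj
  have hij1 := h i hi j hj
  have hji1 := h j hj i hi
  have him := h i hi n hn
  have hjm := h j hj n hn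
  have hmi := h m hm i hi
  have hmj := h m hm j hj
  have hmn := h m hm n hn
  simp only [if_true, if_neg hij, if_neg hij.symm] at hii hjj hij1 hji1
  have hne : ∀ k, k ≠ i → k ≠ j → _root_.rotatePair c s i j ζ k = ζ k := fun k h1 h2 => by
    simp [_root_.rotatePair, h1, h2]
  have hu : _root_.rotatePair c s i j ζ i = (c : ℂ) • ζ i + (s : ℂ) • ζ j := if_pos rfl
  have hw : _root_.rotatePair c s i j ζ j = (-s : ℂ) • ζ i + (c : ℂ) • ζ j := by
    rw [_root_.rotatePair, if_neg hij.symm, if_pos rfl]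
  by_cases hmi' : m = i
  · subst hmi'
    by_cases hni' : n = m
    · subst hni'
      simp only [hu, inner_add_left, inner_add_right, inner_smul_left, inner_smul_right, hii, hjj,
        hij1, hji1, Complex.conj_ofReal, if_true]
      linear_combination hcs'
    · by_cases hnj' : n = j
      · subst hnj'
        simp only [hu, hw, inner_add_left, inner_add_right, inner_smul_left, inner_smul_right, hii,
          hjj, hij1, hji1, Complex.conj_ofReal, if_neg hij]
        ring
      · simp only [hu, hne n hni' hnj', inner_add_left, inner_smul_left, him, hjm,
          if_neg (Ne.symm hni'), if_neg (Ne.symm hnj'), mul_zero, add_zero]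
  · by_cases hmj' : m = j
    · subst hmj'
      by_cases hni' : n = i
      · subst hni'
        simp only [hu, hw, inner_add_left, inner_add_right, inner_smul_left, inner_smul_right, hii,
          hjj, hij1, hji1, map_neg, Complex.conj_ofReal, if_neg hij.symm]
        ring
      · by_cases hnj' : n = m
        · subst hnj'
          simp only [hw, inner_add_left, inner_add_right, inner_smul_left, inner_smul_right, hii,
            hjj, hij1, hji1, map_neg, Complex.conj_ofReal, if_true]
          linear_combination hcs'
        · simp only [hw, hne n hni' hnj', inner_add_left, inner_smul_left, him, hjm,
            if_neg (Ne.symm hni'), if_neg (Ne.symm hnj'), mul_zero, add_zero]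
    · rw [hne m hmi' hmj']
      by_cases hni' : n = i
      · subst hni'
        simp only [hu, inner_add_right, inner_smul_right, hmi, hmj, if_neg hmi', if_neg hmj',
          mul_zero, add_zero]
      · by_cases hnj' : n = j
        · subst hnj'
          simp only [hw, inner_add_right, inner_smul_right, hmi, hmj, if_neg hmi', if_neg hmj',
            mul_zero, add_zero]
        · rw [hne n hni' hnj', hmn]

theorem tsum_sub_tsum_of_eq_off_pair {E : Type*} [NormedAddCommGroup E] {f g : ℕ → E}
    (hf : Summable f) (hg : Summable g) {i j : ℕ} (hij : i ≠ j)
    (h : ∀ n, n ≠ i → n ≠ j → f n = g n) :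
    ∑' n, f n - ∑' n, g n = (f i - g i) + (f j - g j) := by
  rw [← hf.tsum_sub hg, tsum_eq_sum (s := {i, j}), Finset.sum_pair hij]
  intro n hn
  simp only [Finset.mem_insert, Finset.mem_singleton, not_or] at hn
  rw [h n hn.1 hn.2, sub_self]

theorem diagApply_rotatePair_sub {S : Set ℕ} {ζ : ℕ → H} (h : OrthonormalAt S ζ) {c s : ℝ}
    (hcs : c ^ 2 + s ^ 2 = 1) {i j : ℕ} (hi : i ∈ S) (hj : j ∈ S) (hij : i ≠ j) {p : ℕ → ℝ}
    (hpS : ∀ n, p n ≠ 0 → n ∈ S) (hps : Summable fun n => |p n|) (x : H) :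
    diagApply p (rotatePair c s i j ζ) x - diagApply p ζ x =
      (((p i - p j) * s : ℝ) : ℂ) • (((-s : ℂ) * ⟪ζ i, x⟫_ℂ + (c : ℂ) * ⟪ζ j, x⟫_ℂ) • ζ i +
        ((c : ℂ) * ⟪ζ i, x⟫_ℂ + (s : ℂ) * ⟪ζ j, x⟫_ℂ) • ζ j) := by
  have hcs' : (c : ℂ) ^ 2 = 1 - (s : ℂ) ^ 2 := by
    rw [eq_sub_iff_add_eq]; exact_mod_cast hcs
  rw [diagApply, diagApply, tsum_sub_tsum_of_eq_off_pair
    (summable_diagApply (h.rotatePair hcs hi hj hij) hpS hps x)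
    (summable_diagApply h hpS hps x) hij fun n h1 h2 => by simp [rotatePair, h1, h2]]
  simp only [rotatePair, if_true, if_neg hij.symm, inner_add_left, inner_smul_left, map_neg,
    Complex.conj_ofReal, Complex.ofReal_mul, Complex.ofReal_sub]
  match_scalars
  · linear_combination (p i * ⟪ζ i, x⟫_ℂ) * hcs'
  · linear_combination (p j * ⟪ζ j, x⟫_ℂ) * hcs'

theorem trFor_rotatePair {A : H →L[ℂ] H} (hA : IsSelfAdjoint A) {S : Set ℕ} {ζ : ℕ → H}
    (h : OrthonormalAt S ζ) {c s : ℝ}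
    (hcs : c ^ 2 + s ^ 2 = 1) {i j : ℕ} (hi : i ∈ S) (hj : j ∈ S) (hij : i ≠ j) {p : ℕ → ℝ}
    (hpS : ∀ n, p n ≠ 0 → n ∈ S) (hps : Summable fun n => |p n|)
    (hAi : (⟪A (ζ i), ζ i⟫_ℂ).re = 0) (hAj : (⟪A (ζ j), ζ j⟫_ℂ).re = 0) :
    (⟪A (rotatePair c s i j ζ i), rotatePair c s i j ζ i⟫_ℂ).re
      = 2 * c * s * (⟪A (ζ i), ζ j⟫_ℂ).re ∧
    trFor A p (rotatePair c s i j ζ) - trFor A p ζ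
      = (p i - p j) * (2 * c * s * (⟪A (ζ i), ζ j⟫_ℂ).re) := by
  have hsymm : (⟪A (ζ j), ζ i⟫_ℂ).re = (⟪A (ζ i), ζ j⟫_ℂ).re := by
    have h1 : ⟪A (ζ j), ζ i⟫_ℂ = ⟪ζ j, A (ζ i)⟫_ℂ := hA.isSymmetric (ζ j) (ζ i)
    rw [h1, ← inner_conj_symm, Complex.conj_re]
  have hu : (⟪A (rotatePair c s i j ζ i), rotatePair c s i j ζ i⟫_ℂ).re
      = 2 * c * s * (⟪A (ζ i), ζ j⟫_ℂ).re := by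
    simp only [rotatePair, if_true]
    simp only [map_add, map_smul, inner_add_left, inner_add_right, inner_smul_left,
      inner_smul_right, Complex.conj_ofReal, Complex.add_re,
      Complex.re_ofReal_mul, hAi, hAj, hsymm]
    ring
  refine ⟨hu, ?_⟩
  have hw : (⟪A (rotatePair c s i j ζ j), rotatePair c s i j ζ j⟫_ℂ).re
      = -(2 * c * s * (⟪A (ζ i), ζ j⟫_ℂ).re) := by
    simp only [rotatePair, if_true, if_neg hij.symm]
    simp only [map_add, map_smul, inner_add_left, inner_add_right, inner_smul_left,
      inner_smul_right, Complex.conj_ofReal, Complex.add_re, ← Complex.ofReal_neg,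
      Complex.re_ofReal_mul, hAi, hAj, hsymm]
    ring
  rw [trFor, trFor, tsum_sub_tsum_of_eq_off_pair
    (summable_trFor A (h.rotatePair hcs hi hj hij) hpS hps)
    (summable_trFor A h hpS hps) hij fun n h1 h2 => by simp [rotatePair, h1, h2], hu, hw, hAi, hAj]
  ring

/-- Rotating a pair of eigenvectors coupled by `A`. -/
theorem hasPerturbation_of_re_inner_ne_zero {A : H →L[ℂ] H} (hA : IsSelfAdjoint A) {p : ℕ → ℝ}
    {ζ : ℕ → H} {S : Set ℕ}
    (hS : OrthonormalAt S ζ) (hp0 : ∀ n, 0 ≤ p n) (hps : Summable p) (hp1 : ∑' n, p n = 1)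
    (hpS : ∀ n, p n ≠ 0 → n ∈ S) (htr : trFor A p ζ = 0) {i j : ℕ} (hi : i ∈ S) (hj : j ∈ S)
    (hij : i ≠ j) (hAi : (⟪A (ζ i), ζ i⟫_ℂ).re = 0) (hAj : (⟪A (ζ j), ζ j⟫_ℂ).re = 0)
    (hne : (⟪A (ζ i), ζ j⟫_ℂ).re ≠ 0) {ε : ℝ} (hε : 0 < ε) : HasPerturbation A p ζ ε := by
  obtain ⟨s, hs0, hs1, hsε⟩ : ∃ s : ℝ, 0 < s ∧ s < 1 ∧ 2 * |p i - p j| * s < ε := by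
    have hd : 0 < 2 * |p i - p j| + 1 := by positivity
    refine ⟨min (1 / 2) (ε / (2 * |p i - p j| + 1)), by positivity,
      (min_le_left _ _).trans_lt (by norm_num), ?_⟩
    have h1 : (2 * |p i - p j| + 1) * min (1 / 2) (ε / (2 * |p i - p j| + 1)) ≤ ε :=
      (mul_le_mul_of_nonneg_left (min_le_right _ _) hd.le).trans_eq (mul_div_cancel₀ _ hd.ne')
    have h2 : 0 < min (1 / 2) (ε / (2 * |p i - p j| + 1)) := by positivity
    linarith
  -- `(a, b)` is the half-angle rotation diagonalising the difference
  obtain ⟨a, b, ha0, hb0, hab, hba⟩ : ∃ a b : ℝ, 0 < a ∧ 0 < b ∧ a ^ 2 + b ^ 2 = 1 ∧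
      b ^ 2 - a ^ 2 = s := by
    have h1 : 0 < (1 - s) / 2 := by linarith
    have h2 : 0 < (1 + s) / 2 := by linarith
    refine ⟨√((1 - s) / 2), √((1 + s) / 2), Real.sqrt_pos.2 h1, Real.sqrt_pos.2 h2, ?_, ?_⟩ <;>
    · rw [Real.sq_sqrt h1.le, Real.sq_sqrt h2.le]; ring
  have hcs : (2 * a * b) ^ 2 + s ^ 2 = 1 := by
    rw [← hba]; linear_combination (a ^ 2 + b ^ 2 + 1) * hab
  set c := 2 * a * b with hc
  have hc0 : c ≠ 0 := by positivity
  set ξ := rotatePair c s i j ζ with hξ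
  have hSξ : OrthonormalAt S ξ := hS.rotatePair hcs hi hj hij
  obtain ⟨hu, htrξ⟩ := trFor_rotatePair hA hS hcs hi hj hij hpS hps.abs hAi hAj
  have hdiag := diagApply_rotatePair_sub hS hcs hi hj hij hpS hps.abs
  have hr : 2 * c * s * (⟪A (ζ i), ζ j⟫_ℂ).re ≠ 0 := by
    simp [hc0, hs0.ne', hne]
  rw [htr, sub_zero] at htrξ
  by_cases hpij : p i = p j
  · rw [hpij, sub_self, zero_mul] at htrξ
    refine (hasPerturbation_of_diag_ne_zero hSξ hp0 hps hp1 hpS htrξ hi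
      (by rw [hξ, hu]; exact hr) hε).congr fun x => ?_
    rw [← sub_eq_zero, hdiag, hpij]
    simp
  set d := (p i - p j) * s with hd
  set m : ℕ → ℝ := fun n => if n = i then d else if n = j then -d else 0 with hm
  have hmS : ∀ n, m n ≠ 0 → n ∈ S := by
    intro n hn
    simp only [hm] at hn
    split_ifs at hn with h1 h2
    · exact h1 ▸ hi
    · exact h2 ▸ hj
    · exact absurd rfl hn
  have hm0 : ∀ n ∉ ({i, j} : Finset ℕ), m n = 0 := by
    intro n hn
    simp only [Finset.mem_insert, Finset.mem_singleton, not_or] at hn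
    simp [hm, hn.1, hn.2]
  refine ⟨p, ξ, m, rotatePair a b i j ζ, ⟨hp0, hps, hp1, hSξ.onSupport hpS⟩,
    ⟨summable_of_ne_finset_zero (s := {i, j}) fun n hn => by simp [hm0 n hn],
      (hS.rotatePair hab hi hj hij).onSupport hmS, fun x => ?_⟩, ?_, ?_⟩
  · have hba' : (s : ℂ) = (b : ℂ) ^ 2 - (a : ℂ) ^ 2 := by exact_mod_cast hba.symm
    rw [hdiag, diagApply, tsum_eq_sum (s := {i, j}) fun n hn => by simp [hm0 n hn],
      Finset.sum_pair hij]
    simp only [hm, rotatePair, if_true, if_neg hij.symm, inner_add_left, inner_smul_left,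
      map_neg, Complex.conj_ofReal, hc, Complex.ofReal_neg, Complex.ofReal_mul]
    rw [hba']
    match_scalars <;> ring
  · rw [tsum_eq_sum (s := {i, j}) fun n hn => by simp [hm0 n hn], Finset.sum_pair hij]
    simp only [hm, if_true, if_neg hij.symm, abs_neg]
    rw [hd, abs_mul, abs_of_pos hs0]
    linarith
  · rw [htrξ]
    exact mul_ne_zero (sub_ne_zero.2 hpij) hr

theorem inner_unit_smul_smul {c : ℂ} (hc : ‖c‖ = 1) (v x : H) :
    ⟪c • v, x⟫_ℂ • (c • v) = ⟪v, x⟫_ℂ • v := by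
  have h : (starRingEnd ℂ) c * c = 1 := by
    rw [mul_comm, Complex.mul_conj, Complex.normSq_eq_norm_sq, hc]; simp
  rw [inner_smul_left, smul_smul]
  congr 1
  linear_combination ⟪v, x⟫_ℂ * h

theorem hasPerturbation_of_inner_ne_zero {A : H →L[ℂ] H} (hA : IsSelfAdjoint A) {p : ℕ → ℝ}
    {ζ : ℕ → H} {S : Set ℕ}
    (hS : OrthonormalAt S ζ) (hp0 : ∀ n, 0 ≤ p n) (hps : Summable p) (hp1 : ∑' n, p n = 1)
    (hpS : ∀ n, p n ≠ 0 → n ∈ S) (htr : trFor A p ζ = 0) {i j : ℕ} (hi : i ∈ S) (hj : j ∈ S)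
    (hij : i ≠ j) (hAi : (⟪A (ζ i), ζ i⟫_ℂ).re = 0) (hAj : (⟪A (ζ j), ζ j⟫_ℂ).re = 0)
    (hne : ⟪A (ζ i), ζ j⟫_ℂ ≠ 0) {ε : ℝ} (hε : 0 < ε) : HasPerturbation A p ζ ε := by
  set z := ⟪A (ζ i), ζ j⟫_ℂ with hz
  have hz0 : (‖z‖ : ℂ) ≠ 0 := by simpa using hne
  set c : ℂ := (starRingEnd ℂ) z / ‖z‖ with hc
  have hc1 : ‖c‖ = 1 := by
    rw [hc, norm_div, RCLike.norm_conj, Complex.norm_real, norm_norm,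
      div_self (norm_ne_zero_iff.2 hne)]
  have hcc : (starRingEnd ℂ) c * c = 1 := by
    rw [mul_comm, Complex.mul_conj, Complex.normSq_eq_norm_sq, hc1]; simp
  have hcz : c * z = (‖z‖ : ℂ) := by
    rw [hc, div_mul_eq_mul_div, mul_comm, Complex.mul_conj, Complex.normSq_eq_norm_sq,
      div_eq_iff hz0]
    push_cast; ring
  -- only the `j`-th vector is multiplied by a phase
  set ξ : ℕ → H := fun n => (if n = j then c else 1) • ζ n with hξ
  have hξS : OrthonormalAt S ξ := by
    intro m hm n hn
    simp only [hξ, inner_smul_left, inner_smul_right, hS m hm n hn]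
    by_cases hmn : m = n
    · subst hmn
      by_cases hmj : m = j
      · simp [hmj, mul_comm c, hcc]
      · simp [hmj]
    · simp [hmn]
  have hquad : ∀ n, ⟪A (ξ n), ξ n⟫_ℂ = ⟪A (ζ n), ζ n⟫_ℂ := by
    intro n
    simp only [hξ, map_smul, inner_smul_left, inner_smul_right]
    split_ifs
    · linear_combination ⟪A (ζ n), ζ n⟫_ℂ * hcc
    · simp
  refine (hasPerturbation_of_re_inner_ne_zero hA hξS hp0 hps hp1 hpS ?_ hi hj hij
    (by rw [hquad, hAi]) (by rw [hquad, hAj]) ?_ hε).congr fun x => ?_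
  · rw [← htr, trFor, trFor]
    exact tsum_congr fun n => by rw [hquad]
  · have : ⟪A (ξ i), ξ j⟫_ℂ = (‖z‖ : ℂ) := by
      simp only [hξ, if_neg hij, one_smul, if_true, inner_smul_right, ← hz, hcz]
    rw [this, Complex.ofReal_re]
    exact norm_ne_zero_iff.2 hne
  · refine tsum_congr fun n => ?_
    rw [mul_smul, mul_smul, inner_unit_smul_smul]
    split_ifs
    · exact hc1
    · simp

/-- The sequence `f` preceded by `a`. -/
def prepend {α : Type*} (a : α) (f : ℕ → α) : ℕ → α
  | 0 => a
  | n + 1 => f n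

theorem tsum_eq_tsum_succ_of_zero {E : Type*} [NormedAddCommGroup E] {f : ℕ → E} (h : f 0 = 0) :
    ∑' n, f n = ∑' n, f (n + 1) := by
  refine (Function.Injective.tsum_eq Nat.succ_injective fun n hn => ?_).symm
  rcases n with _ | n
  · exact absurd h hn
  · exact ⟨n, rfl⟩

theorem trFor_prepend (A : H →L[ℂ] H) (p : ℕ → ℝ) (ζ : ℕ → H) (v : H) :
    trFor A (prepend 0 p) (prepend v ζ) = trFor A p ζ := by
  rw [trFor, tsum_eq_tsum_succ_of_zero (by simp [prepend])]
  rfl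

theorem diagApply_prepend (p : ℕ → ℝ) (ζ : ℕ → H) (v x : H) :
    diagApply (prepend 0 p) (prepend v ζ) x = diagApply p ζ x := by
  rw [diagApply, tsum_eq_tsum_succ_of_zero (by simp [prepend])]
  rfl

theorem isDensityRep_prepend {p : ℕ → ℝ} {ζ : ℕ → H} (hρ : IsDensityRep p ζ) (v : H) :
    IsDensityRep (prepend 0 p) (prepend v ζ) := by
  obtain ⟨h0, hs, h1, ho⟩ := hρ
  refine ⟨?_, (summable_nat_add_iff 1).1 hs, ?_, ?_⟩
  · rintro (_ | n)
    · exact le_rfl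
    · exact h0 n
  · rw [tsum_eq_tsum_succ_of_zero rfl]
    exact h1
  · rintro (_ | m) (_ | n) hm hn
    · exact absurd rfl hm
    · exact absurd rfl hm
    · exact absurd rfl hn
    · simpa [prepend] using ho m n hm hn

theorem orthonormalAt_prepend {p : ℕ → ℝ} {ζ : ℕ → H} (ho : OrthonormalOnSupport p ζ) {v : H}
    (hv : ‖v‖ = 1) (hvζ : ∀ n, p n ≠ 0 → ⟪ζ n, v⟫_ℂ = 0) :
    OrthonormalAt {n | n = 0 ∨ prepend 0 p n ≠ 0} (prepend v ζ) := by
  rintro (_ | m) hm (_ | n) hn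
  · simp [prepend, inner_self_eq_norm_sq_to_K, hv]
  · have : p n ≠ 0 := by simpa [prepend] using hn
    simpa [prepend] using inner_eq_zero_symm.1 (hvζ n this)
  · have : p m ≠ 0 := by simpa [prepend] using hm
    simpa [prepend] using hvζ m this
  · have h1 : p m ≠ 0 := by simpa [prepend] using hm
    have h2 : p n ≠ 0 := by simpa [prepend] using hn
    simpa [prepend] using ho m n h1 h2

/-- A self-adjoint operator is zero if, with respect to a set `s` and its orthogonal complement,
its off-diagonal entries and its quadratic form on the complement vanish. -/
theorem eq_zero_of_inner_eq_zero {A : H →L[ℂ] H} (hA : IsSelfAdjoint A) {s : Set H}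
    (h1 : ∀ e ∈ s, ∀ f ∈ s, ⟪A e, f⟫_ℂ = 0)
    (h2 : ∀ e ∈ s, ∀ v, (∀ f ∈ s, ⟪f, v⟫_ℂ = 0) → ⟪A e, v⟫_ℂ = 0)
    (h3 : ∀ v, (∀ f ∈ s, ⟪f, v⟫_ℂ = 0) → ⟪A v, v⟫_ℂ = 0) : A = 0 := by
  have hsym : ∀ x y, ⟪A x, y⟫_ℂ = ⟪x, A y⟫_ℂ := hA.isSymmetric
  have hAe : ∀ e ∈ s, A e = 0 := fun e he =>
    inner_self_eq_zero.1 (h2 e he (A e) fun f hf => inner_eq_zero_symm.1 (h1 e he f hf))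
  have hran : ∀ x, ∀ f ∈ s, ⟪f, A x⟫_ℂ = 0 := fun x f hf => by
    rw [← hsym, hAe f hf, inner_zero_left]
  have hmem : ∀ v, v ∈ (Submodule.span ℂ s)ᗮ ↔ ∀ f ∈ s, ⟪f, v⟫_ℂ = 0 := fun v => by
    refine ⟨fun h f hf => h f (Submodule.subset_span hf), fun h f hf => ?_⟩
    induction hf using Submodule.span_induction with
    | mem f hf => exact h f hf
    | zero => simp
    | add f g _ _ hf hg => rw [inner_add_left, hf, hg, add_zero]
    | smul c f _ hf => rw [inner_smul_left, hf, mul_zero]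
  have hres : (A : H →ₗ[ℂ] H).restrict
      (fun x _ => (hmem (A x)).2 (hran x) :
        ∀ x ∈ (Submodule.span ℂ s)ᗮ, (A : H →ₗ[ℂ] H) x ∈ (Submodule.span ℂ s)ᗮ) = 0 :=
    inner_map_self_eq_zero _ |>.1 fun v => h3 v ((hmem v).1 v.2)
  ext x
  have h4 : A (A x) = 0 := congrArg Subtype.val
    (LinearMap.congr_fun hres ⟨A x, (hmem (A x)).2 (hran x)⟩)
  have h5 : ⟪A x, A x⟫_ℂ = 0 := by rw [hsym, h4, inner_zero_right]
  simpa using inner_self_eq_zero.1 h5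

/-- Let `ρ = ∑ᵢ pᵢ Pᵢ` be a density operator (given by a canonical
representation `(p, ζ)`) and `A ≠ 0` a bounded self-adjoint operator with `Tr(ρ A) = 0`.
Then for every `ε > 0` there is a density operator `σ` (with representation `(q, ξ)`) such
that `Tr|σ - ρ| < ε` (witnessed by a canonical representation `(m, η)` of `σ - ρ`) and
`Tr(σ A) ≠ 0`. -/
theorem stmt6 [TopologicalSpace.SeparableSpace H]
    (A : H →L[ℂ] H) (hA : IsSelfAdjoint A) (hA0 : A ≠ 0)
    (p : ℕ → ℝ) (ζ : ℕ → H) (hρ : IsDensityRep p ζ)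
    (htr : trFor A p ζ = 0) :
    ∀ ε > (0 : ℝ), ∃ (q : ℕ → ℝ) (ξ : ℕ → H) (m : ℕ → ℝ) (η : ℕ → H),
      IsDensityRep q ξ ∧ IsDiffRep q ξ p ζ m η ∧ (∑' n, |m n|) < ε ∧
      trFor A q ξ ≠ 0 := by
  obtain ⟨hp0, hps, hp1, ho⟩ := id hρ
  intro ε hε
  change HasPerturbation A p ζ ε
  by_contra hcon
  have hS : OrthonormalAt {n | p n ≠ 0} ζ := fun m hm n hn => ho m n hm hn
  have hdiag : ∀ i, p i ≠ 0 → (⟪A (ζ i), ζ i⟫_ℂ).re = 0 := by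
    intro i hi
    by_contra hne
    exact hcon (hasPerturbation_of_diag_ne_zero hS hp0 hps hp1 (fun _ h => h) htr hi hne hε)
  have hreal : ∀ v, (⟪A v, v⟫_ℂ).re = 0 → ⟪A v, v⟫_ℂ = 0 := fun v hv =>
    Complex.ext hv (hA.isSymmetric.im_inner_apply_self v)
  have hunit : ∀ v, ‖v‖ = 1 → (∀ n, p n ≠ 0 → ⟪ζ n, v⟫_ℂ = 0) →
      (⟪A v, v⟫_ℂ).re = 0 ∧ ∀ i, p i ≠ 0 → ⟪A (ζ i), v⟫_ℂ = 0 := by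
    intro v hv hvζ
    obtain ⟨hp0', hps', hp1', -⟩ := isDensityRep_prepend hρ v
    have hS' := orthonormalAt_prepend ho hv hvζ
    have htr' : trFor A (prepend 0 p) (prepend v ζ) = 0 := by rw [trFor_prepend, htr]
    have hv0 : (⟪A v, v⟫_ℂ).re = 0 := by
      by_contra hne
      exact hcon ((hasPerturbation_of_diag_ne_zero hS' hp0' hps' hp1' (fun _ h => Or.inr h) htr'
        (i := 0) (Or.inl rfl) hne hε).congr (diagApply_prepend p ζ v))
    refine ⟨hv0, fun i hi => ?_⟩
    by_contra hne
    exact hcon ((hasPerturbation_of_inner_ne_zero hA hS' hp0' hps' hp1' (fun _ h => Or.inr h) htr'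
      (i := i + 1) (j := 0) (Or.inr hi) (Or.inl rfl) (Nat.succ_ne_zero i) (hdiag i hi) hv0 hne
      hε).congr (diagApply_prepend p ζ v))
  have hscale : ∀ v, v ≠ 0 → (∀ f ∈ ζ '' {n | p n ≠ 0}, ⟪f, v⟫_ℂ = 0) →
      (⟪A v, v⟫_ℂ).re = 0 ∧ ∀ i, p i ≠ 0 → ⟪A (ζ i), v⟫_ℂ = 0 := by
    intro v hv hvζ
    have hn : ((‖v‖⁻¹ : ℝ) : ℂ) ≠ 0 := by simpa using hv
    obtain ⟨h1, h2⟩ := hunit (((‖v‖⁻¹ : ℝ) : ℂ) • v)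
      (by rw [norm_smul, Complex.norm_real, norm_inv, norm_norm,
        inv_mul_cancel₀ (norm_ne_zero_iff.2 hv)])
      (fun n hn => by rw [inner_smul_right, hvζ _ ⟨n, hn, rfl⟩, mul_zero])
    refine ⟨?_, fun i hi => ?_⟩
    · have h3 := hreal _ h1
      rw [map_smul, inner_smul_left, inner_smul_right, Complex.conj_ofReal] at h3
      rw [(mul_eq_zero.1 ((mul_eq_zero.1 h3).resolve_left hn)).resolve_left hn, Complex.zero_re]
    · have h3 := h2 i hi
      rw [inner_smul_right] at h3
      exact (mul_eq_zero.1 h3).resolve_left hn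
  refine hA0 (eq_zero_of_inner_eq_zero hA (s := ζ '' {n | p n ≠ 0}) ?_ ?_ ?_)
  · rintro _ ⟨i, hi, rfl⟩ _ ⟨j, hj, rfl⟩
    by_cases hij : i = j
    · subst hij
      exact hreal _ (hdiag i hi)
    · by_contra hne
      exact hcon (hasPerturbation_of_inner_ne_zero hA hS hp0 hps hp1 (fun _ h => h) htr hi hj hij
        (hdiag i hi) (hdiag j hj) hne hε)
  · rintro _ ⟨i, hi, rfl⟩ v hv
    by_cases hv0 : v = 0
    · rw [hv0, inner_zero_right]
    · exact (hscale v hv0 hv).2 i hi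
  · intro v hv
    by_cases hv0 : v = 0
    · rw [hv0, inner_zero_right]
    · exact hreal _ (hscale v hv0 hv).1
end

section
/- Let E be the space of density operators with the trace-norm topology, W ⊆ E a nonempty open set, and A a bounded self-adjoint operator such that Tr(ρA) = k for all ρ ∈ W, where k is a real constant. Then A = k·I. -/
open scoped InnerProductSpace

variable {H : Type*} [NormedAddCommGroup H] [InnerProductSpace ℂ H] [CompleteSpace H]

/-- A finite real combination of rank-one operators `⟪v j, ·⟫ v j` can be diagonalized by an
orthonormal family in the span of the `v j`. -/
theorem exists_finite_diagonalization
    {E : Type*} [NormedAddCommGroup E] [InnerProductSpace ℂ E]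
    {J : Type*} [Fintype J] (c : J → ℝ) (v : J → E) :
    ∃ (d : ℕ) (l : Fin d → ℝ) (b : Fin d → E), Orthonormal ℂ b ∧
      (∀ i, b i ∈ Submodule.span ℂ (Set.range v)) ∧
      (∀ y : E, ∑ i, l i • ⟪b i, y⟫_ℂ • b i = ∑ j, c j • ⟪v j, y⟫_ℂ • v j) ∧
      (∀ A : E →L[ℂ] E,
        ∑ i, l i • (⟪A (b i), b i⟫_ℂ).re = ∑ j, c j • (⟪A (v j), v j⟫_ℂ).re) ∧
      ((∀ j, 0 ≤ c j) → ∀ i, 0 ≤ l i) := by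
  set V := Submodule.span ℂ (Set.range v)
  have : FiniteDimensional ℂ V := FiniteDimensional.span_of_finite ℂ (Set.finite_range v)
  let w : J → V := fun j => ⟨v j, Submodule.subset_span ⟨j, rfl⟩⟩
  let T : V →ₗ[ℂ] V :=
    { toFun := fun y => ∑ j, ((c j : ℂ) * ⟪w j, y⟫_ℂ) • w j
      map_add' := fun y z => by
        simp only [inner_add_right, mul_add, add_smul, Finset.sum_add_distrib]
      map_smul' := fun r y => by
        simp only [inner_smul_right, RingHom.id_apply, Finset.smul_sum, smul_smul]
        exact Finset.sum_congr rfl fun j _ => by ring_nf }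
  have hT : T.IsSymmetric := by
    intro y z
    simp only [T, LinearMap.coe_mk, AddHom.coe_mk, sum_inner, inner_sum, inner_smul_left,
      inner_smul_right, map_mul, Complex.conj_ofReal, inner_conj_symm]
    exact Finset.sum_congr rfl fun j _ => by ring
  let B := hT.eigenvectorBasis rfl
  let l := hT.eigenvalues rfl
  have hrepr (j : J) : ∑ i, ⟪(B i : E), v j⟫_ℂ • (B i : E) = v j := by
    simpa using congrArg (Subtype.val) (B.sum_repr' (w j))
  have heig (i) : ∑ j, ((c j : ℂ) * ⟪v j, (B i : E)⟫_ℂ) • v j = (l i : ℂ) • (B i : E) := by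
    have h : T (B i) = (l i : ℂ) • B i := hT.apply_eigenvectorBasis rfl i
    simpa [T, w, -Complex.coe_smul] using congrArg Subtype.val h
  have hB : Orthonormal ℂ (fun i => (B i : E)) := by
    simpa using! B.orthonormal.comp_linearIsometry V.subtypeₗᵢ
  refine ⟨_, l, fun i => B i, hB, fun i => (B i).2, fun y => ?_, fun A => ?_, fun hc i => ?_⟩
  · have h (i) : l i • ⟪(B i : E), y⟫_ℂ • (B i : E)
        = ∑ j, (⟪(B i : E), y⟫_ℂ * ((c j : ℂ) * ⟪v j, (B i : E)⟫_ℂ)) • v j := by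
      rw [← Complex.coe_smul, smul_comm, ← heig, Finset.smul_sum]
      simp only [smul_smul]
    simp only [h]
    rw [Finset.sum_comm]
    refine Finset.sum_congr rfl fun j _ => ?_
    rw [← Finset.sum_smul, ← Complex.coe_smul, smul_smul]
    congr 1
    conv_rhs => rw [← hrepr j, sum_inner, Finset.mul_sum]
    refine Finset.sum_congr rfl fun i _ => ?_
    rw [inner_smul_left, inner_conj_symm]
    ring
  · have h (i) : (l i : ℂ) * ⟪A (B i : E), (B i : E)⟫_ℂ
        = ∑ j, (c j : ℂ) * (⟪v j, (B i : E)⟫_ℂ * ⟪A (B i : E), v j⟫_ℂ) := by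
      rw [← inner_smul_right, ← heig, inner_sum]
      simp only [inner_smul_right, mul_assoc]
    have key : ∑ i, (l i : ℂ) * ⟪A (B i : E), (B i : E)⟫_ℂ
        = ∑ j, (c j : ℂ) * ⟪A (v j), v j⟫_ℂ := by
      simp only [h]
      rw [Finset.sum_comm]
      refine Finset.sum_congr rfl fun j _ => ?_
      conv_rhs => rw [← hrepr j, map_sum, sum_inner, Finset.mul_sum]
      refine Finset.sum_congr rfl fun i _ => ?_
      rw [map_smul, inner_smul_left, inner_conj_symm, hrepr j]
    simpa using congrArg Complex.re key
  · have h := congrArg (fun z => (⟪(B i : E), z⟫_ℂ).re) (heig i)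
    have hn : ⟪(B i : E), (B i : E)⟫_ℂ = 1 := by
      simpa using (orthonormal_iff_ite.mp hB) i i
    simp only [inner_smul_right, hn, mul_one, Complex.ofReal_re, inner_sum, mul_assoc] at h
    rw [← h, Complex.re_sum]
    refine Finset.sum_nonneg fun j _ => ?_
    rw [Complex.re_ofReal_mul, ← RCLike.re_eq_complex_re, inner_mul_symm_re_eq_norm]
    exact mul_nonneg (hc j) (norm_nonneg _)

theorem hasSum_smul_concat {E : Type*} {G : Type*}
    [AddCommGroup G] [Module ℝ G] [TopologicalSpace G]
    [IsTopologicalAddGroup G] (g : E → G) {p : ℕ → ℝ} {ζ : ℕ → E} {S : G}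
    (h : HasSum (fun n => p n • g (ζ n)) S) (s : Finset ℕ) {d : ℕ} (l : Fin d → ℝ)
    (b : Fin d → E) (e : ℕ ≃ ℕ ⊕ Fin d) :
    HasSum (fun n => Sum.elim (fun n => if n ∈ s then 0 else p n) l (e n) •
      g (Sum.elim ζ b (e n))) (S - ∑ n ∈ s, p n • g (ζ n) + ∑ i, l i • g (b i)) := by
  refine (e.hasSum_iff (f := fun k => Sum.elim (fun n => if n ∈ s then 0 else p n) l k •
    g (Sum.elim ζ b k))).mpr (HasSum.sum ?_ (hasSum_fintype _))
  have h' : HasSum (fun n => if n ∈ s then p n • g (ζ n) else 0) (∑ n ∈ s, p n • g (ζ n)) := by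
    rw [← Finset.sum_congr rfl fun n (hn : n ∈ s) => if_pos hn]
    exact hasSum_sum_of_ne_finset_zero fun n hn => if_neg hn
  convert! h.sub h' using 2 with n
  by_cases hn : n ∈ s <;> simp [hn]

theorem orthonormalOnSupport_concat
    {E : Type*} [NormedAddCommGroup E] [InnerProductSpace ℂ E]
    {p : ℕ → ℝ} {ζ : ℕ → E} (h : OrthonormalOnSupport p ζ)
    {d : ℕ} (l : Fin d → ℝ) {b : Fin d → E} (hb : Orthonormal ℂ b)
    (hζb : ∀ n, p n ≠ 0 → ∀ i, ⟪ζ n, b i⟫_ℂ = 0) (e : ℕ ≃ ℕ ⊕ Fin d) :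
    OrthonormalOnSupport (fun n => Sum.elim p l (e n)) (fun n => Sum.elim ζ b (e n)) := by
  intro m n hm hn
  dsimp only at hm hn ⊢
  simp only [← e.injective.eq_iff (a := m)]
  generalize e m = i at *
  generalize e n = j at *
  rcases i with i | i <;> rcases j with j | j
  · simpa using h i j hm hn
  · simpa using hζb i hm j
  · simpa using inner_eq_zero_symm.mp (hζb j hn i)
  · simpa using orthonormal_iff_ite.mp hb i j

theorem OrthonormalOnSupport.norm_eq_one
    {E : Type*} [NormedAddCommGroup E] [InnerProductSpace ℂ E]
    {p : ℕ → ℝ} {ζ : ℕ → E}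
    (h : OrthonormalOnSupport p ζ) {n : ℕ} (hn : p n ≠ 0) : ‖ζ n‖ = 1 := by
  have h1 := h n n hn hn
  rw [if_pos rfl, inner_self_eq_norm_sq_to_K] at h1
  exact (pow_eq_one_iff_of_nonneg (norm_nonneg _) two_ne_zero).mp (RCLike.ofReal_injective (K := ℂ)
    (by simpa using h1))

theorem IsDensityRep.summable_diag {p : ℕ → ℝ} {ζ : ℕ → H} (h : IsDensityRep p ζ) (y : H) :
    Summable fun n => p n • ⟪ζ n, y⟫_ℂ • ζ n := by
  refine Summable.of_norm_bounded (h.2.1.mul_right ‖y‖) fun n => ?_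
  rcases eq_or_ne (p n) 0 with hn | hn
  · simp [hn]
  · have h1 := h.2.2.2.norm_eq_one hn
    rw [norm_smul, norm_smul, Real.norm_of_nonneg (h.1 n), h1, mul_one]
    exact mul_le_mul_of_nonneg_left
      (by simpa [h1] using norm_inner_le_norm (𝕜 := ℂ) (ζ n) y) (h.1 n)

theorem IsDensityRep.summable_trace
    {E : Type*} [NormedAddCommGroup E] [InnerProductSpace ℂ E]
    {p : ℕ → ℝ} {ζ : ℕ → E} (h : IsDensityRep p ζ)
    (A : E →L[ℂ] E) : Summable fun n => p n • (⟪A (ζ n), ζ n⟫_ℂ).re := by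
  refine Summable.of_norm_bounded (h.2.1.mul_right ‖A‖) fun n => ?_
  rcases eq_or_ne (p n) 0 with hn | hn
  · simp [hn]
  · have h1 := h.2.2.2.norm_eq_one hn
    rw [norm_smul, Real.norm_of_nonneg (h.1 n)]
    refine mul_le_mul_of_nonneg_left ?_ (h.1 n)
    refine (Complex.abs_re_le_norm _).trans ((norm_inner_le_norm _ _).trans ?_)
    simpa [h1] using A.le_opNorm (ζ n)

theorem diagApply_eq
    {E : Type*} [NormedAddCommGroup E] [InnerProductSpace ℂ E]
    (l : ℕ → ℝ) (ζ : ℕ → E) (x : E) :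
    diagApply l ζ x = ∑' n, l n • ⟪ζ n, x⟫_ℂ • ζ n := by
  simp only [diagApply, mul_smul, Complex.coe_smul]

theorem OrthonormalOnSupport.smul_re_inner_self
    {E : Type*} [NormedAddCommGroup E] [InnerProductSpace ℂ E]
    {p : ℕ → ℝ} {ζ : ℕ → E}
    (h : OrthonormalOnSupport p ζ) (n : ℕ) :
    p n • (⟪(1 : E →L[ℂ] E) (ζ n), ζ n⟫_ℂ).re = p n := by
  rcases eq_or_ne (p n) 0 with hn | hn
  · simp [hn]
  · rw [one_apply_eq_self, h n n hn hn]
    simp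

theorem sum_option_transfer {E : Type*} {G : Type*}
    [AddCommGroup G] [Module ℝ G] {s : Finset ℕ} {a : ℕ}
    (has : a ∈ s) (g : E → G) (p : ℕ → ℝ) (ζ : ℕ → E) (x : E) (t : ℝ) :
    ∑ j : Option s, (j.elim t fun n => p n - if (n : ℕ) = a then t else 0 : ℝ) •
      g (j.elim x fun n => ζ n) = ∑ n ∈ s, p n • g (ζ n) + t • (g x - g (ζ a)) := by
  rw [Fintype.sum_option]
  simp only [Option.elim]
  rw [Finset.univ_eq_attach, Finset.sum_attach s
    fun n => (p n - if n = a then t else 0) • g (ζ n)]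
  simp only [sub_smul, Finset.sum_sub_distrib, ite_smul, zero_smul, Finset.sum_ite_eq', smul_sub]
  rw [if_pos has]
  abel

/-- Moving weight `t` from an eigenvector `ζ a` of a density operator to a unit vector `x` yields a
density operator, provided `x` decomposes along finitely many eigenvectors and the orthogonal
complement of all of them. -/
theorem IsDensityRep.exists_transfer {p : ℕ → ℝ} {ζ : ℕ → H} (h : IsDensityRep p ζ) {a : ℕ}
    (ha : p a ≠ 0) {x : H} (hx1 : ‖x‖ = 1)
    (hx : x ∈ Submodule.span ℂ (ζ '' {n | p n ≠ 0}) ⊔ (Submodule.span ℂ (ζ '' {n | p n ≠ 0}))ᗮ)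
    {t : ℝ} (ht : 0 ≤ t) (hta : t ≤ p a) :
    ∃ (q : ℕ → ℝ) (ξ : ℕ → H), IsDensityRep q ξ ∧
      (∀ y, diagApply q ξ y - diagApply p ζ y
        = t • (⟪x, y⟫_ℂ • x - ⟪ζ a, y⟫_ℂ • ζ a)) ∧
      ∀ A : H →L[ℂ] H, trFor A q ξ
        = trFor A p ζ + t • ((⟪A x, x⟫_ℂ).re - (⟪A (ζ a), ζ a⟫_ℂ).re) := by
  classical
  obtain ⟨y, hy, z, hz, rfl⟩ := Submodule.mem_sup.mp hx
  obtain ⟨s₀, hs₀, c₀, rfl⟩ := (Submodule.mem_span_image_iff_exists_fun ℂ).mp hy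
  set x := ∑ i, c₀ i • ζ i + z with hxdef
  let s := insert a s₀
  have has : a ∈ s := Finset.mem_insert_self a s₀
  let c : Option s → ℝ := fun j => j.elim t fun n => p n - if (n : ℕ) = a then t else 0
  let v : Option s → H := fun j => j.elim x fun n => ζ n
  have hc (j) : 0 ≤ c j := by
    rcases j with _ | n
    · exact ht
    · by_cases hn : (n : ℕ) = a
      · simpa [c, hn] using hta
      · simpa [c, hn] using h.1 n
  obtain ⟨d, l, b, hb, hbV, hdiag, htr, hl⟩ := exists_finite_diagonalization c v
  obtain ⟨e⟩ : Nonempty (ℕ ≃ ℕ ⊕ Fin d) := nonempty_equiv_of_countable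
  let p' : ℕ → ℝ := fun n => if n ∈ s then 0 else p n
  let q : ℕ → ℝ := fun n => Sum.elim p' l (e n)
  let ξ : ℕ → H := fun n => Sum.elim ζ b (e n)
  have hp' {n} (hn : p' n ≠ 0) : n ∉ s ∧ p n ≠ 0 := by
    by_cases hs : n ∈ s <;> simp_all [p']
  have horth : OrthonormalOnSupport q ξ := by
    refine orthonormalOnSupport_concat (fun m n hm hn => h.2.2.2 m n (hp' hm).2 (hp' hn).2) l hb
      (fun n hn i => ?_) e
    have hns := (hp' hn).1
    have hpn := (hp' hn).2
    have hζ (k) (hk : k ∈ s) : ⟪ζ n, ζ k⟫_ℂ = 0 := by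
      have hpk : p k ≠ 0 := by
        rcases Finset.mem_insert.mp hk with rfl | hk
        · exact ha
        · exact hs₀ hk
      rw [h.2.2.2 n k hpn hpk, if_neg (by rintro rfl; exact hns hk)]
    have hle : Submodule.span ℂ (Set.range v) ≤ (ℂ ∙ ζ n)ᗮ := by
      rw [Submodule.span_le]
      rintro _ ⟨j, rfl⟩
      rw [SetLike.mem_coe, Submodule.mem_orthogonal_singleton_iff_inner_right]
      rcases j with _ | k
      · simp only [v, Option.elim, hxdef, inner_add_right, inner_sum, inner_smul_right]
        rw [Submodule.inner_right_of_mem_orthogonal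
          (Submodule.subset_span (Set.mem_image_of_mem ζ hpn)) hz, add_zero]
        exact Finset.sum_eq_zero fun k _ => by
          rw [hζ k (Finset.mem_insert_of_mem k.2), mul_zero]
      · exact hζ k k.2
    exact Submodule.mem_orthogonal_singleton_iff_inner_right.mp (hle (hbV i))
  have htrace (A : H →L[ℂ] H) : HasSum (fun n => q n • (⟪A (ξ n), ξ n⟫_ℂ).re)
      (trFor A p ζ + t • ((⟪A x, x⟫_ℂ).re - (⟪A (ζ a), ζ a⟫_ℂ).re)) := by
    convert! hasSum_smul_concat (fun u => (⟪A u, u⟫_ℂ).re) (h.summable_trace A).hasSum s l b e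
      using 1
    rw [htr, sum_option_transfer has (fun u => (⟪A u, u⟫_ℂ).re), ← add_assoc, sub_add_cancel]
    rfl
  have hone : HasSum q 1 := by
    have h1 := htrace 1
    simp only [horth.smul_re_inner_self] at h1
    convert! h1 using 1
    have h2 : trFor (1 : H →L[ℂ] H) p ζ = 1 := by
      rw [← h.2.2.1]
      exact tsum_congr h.2.2.2.smul_re_inner_self
    simp [h2, hx1, h.2.2.2.norm_eq_one ha]
  refine ⟨q, ξ, ⟨fun n => ?_, hone.summable, hone.tsum_eq, horth⟩, fun y => ?_,
    fun A => (htrace A).tsum_eq⟩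
  · simp only [q]
    rcases e n with k | i
    · by_cases hk : k ∈ s <;> simp [p', hk, h.1 k]
    · exact hl hc i
  · have h1 := hasSum_smul_concat (fun u => ⟪u, y⟫_ℂ • u) (h.summable_diag y).hasSum s l b e
    rw [diagApply_eq, diagApply_eq, h1.tsum_eq, hdiag,
      sum_option_transfer has (fun u => ⟪u, y⟫_ℂ • u)]
    abel

/-- The operators `t (⟪x, ·⟫ x - ⟪u, ·⟫ u)` have diagonal representations whose trace norm is
linear in `t`. -/
theorem exists_isDiffRep_of_transfer
    {E : Type*} [NormedAddCommGroup E] [InnerProductSpace ℂ E] (x u : E) :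
    ∃ (C : ℝ), 0 ≤ C ∧ ∀ t : ℝ, 0 ≤ t → ∃ (m : ℕ → ℝ) (η : ℕ → E), (∑' n, |m n|) = t * C ∧
      ∀ (q : ℕ → ℝ) (ξ : ℕ → E) (p : ℕ → ℝ) (ζ : ℕ → E),
        (∀ y, diagApply q ξ y - diagApply p ζ y = t • (⟪x, y⟫_ℂ • x - ⟪u, y⟫_ℂ • u)) →
        IsDiffRep q ξ p ζ m η := by
  obtain ⟨d, l, b, hb, -, hdiag, -⟩ := exists_finite_diagonalization ![(1 : ℝ), -1] ![x, u]
  obtain ⟨e⟩ : Nonempty (ℕ ≃ ℕ ⊕ Fin d) := nonempty_equiv_of_countable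
  refine ⟨∑ i, |l i|, Finset.sum_nonneg fun i _ => abs_nonneg _, fun t ht => ?_⟩
  let m : ℕ → ℝ := fun n => Sum.elim (fun _ => 0) (fun i => t * l i) (e n)
  let η : ℕ → E := fun n => Sum.elim (fun _ => 0) b (e n)
  have hm : HasSum (fun n => |m n|) (t * ∑ i, |l i|) := by
    refine (e.hasSum_iff (f := fun k => |Sum.elim (fun _ => 0) (fun i => t * l i) k|)).mpr ?_
    rw [← zero_add (t * _)]
    refine HasSum.sum (by simp [Function.comp_def, hasSum_zero]) ?_
    convert! hasSum_fintype (fun i => |t * l i|) using 1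
    simp [abs_mul, abs_of_nonneg ht, Finset.mul_sum]
  refine ⟨m, η, hm.tsum_eq, fun q ξ p ζ hdiff => ⟨hm.summable, ?_, fun y => ?_⟩⟩
  · exact orthonormalOnSupport_concat (fun _ _ h => (h rfl).elim) _ hb (fun _ h => (h rfl).elim) e
  · have h0 : HasSum (fun n : ℕ => (0 : ℝ) • ⟪(0 : E), y⟫_ℂ • (0 : E)) 0 := by
      simp [hasSum_zero]
    have h1 := hasSum_smul_concat (p := fun _ => 0) (ζ := fun _ => 0) (fun u : E => ⟪u, y⟫_ℂ • u)
      h0 ∅ (fun i => t * l i) b e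
    simp only [mul_smul, ← Finset.smul_sum, hdiag] at h1
    rw [hdiff, diagApply_eq]
    refine Eq.trans ?_ (Eq.trans h1.tsum_eq.symm ?_)
    · simp [Fin.sum_univ_two, sub_eq_add_neg]
    · simp [m, η]

/-- Let `W` be a nonempty open subset of the space of density operators with
the trace-norm metric (so `W` contains a trace-norm ball of radius `ε > 0` around some density
operator `ρ₀`), and let `A` be a bounded self-adjoint operator with `Tr(ρ A) = k` for all
`ρ ∈ W`, where `k` is a real constant.  Then `A = k ⬝ I`. -/
theorem stmt9 [TopologicalSpace.SeparableSpace H]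
    (A : H →L[ℂ] H) (hA : IsSelfAdjoint A) (k : ℝ)
    (p₀ : ℕ → ℝ) (ζ₀ : ℕ → H) (hρ₀ : IsDensityRep p₀ ζ₀)
    (ε : ℝ) (hε : 0 < ε)
    (hW : ∀ (q : ℕ → ℝ) (ξ : ℕ → H) (m : ℕ → ℝ) (η : ℕ → H),
      IsDensityRep q ξ → IsDiffRep q ξ p₀ ζ₀ m η → (∑' n, |m n|) < ε →
      trFor A q ξ = k) :
    A = (k : ℂ) • (1 : H →L[ℂ] H) := by
  obtain ⟨a, ha⟩ : ∃ a, p₀ a ≠ 0 := by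
    by_contra! h
    simpa [h] using hρ₀.2.2.1
  set K := Submodule.span ℂ (ζ₀ '' {n | p₀ n ≠ 0})
  have htransfer (x : H) (hx1 : ‖x‖ = 1) (hx : x ∈ K ⊔ Kᗮ) :
      ∃ t : ℝ, 0 < t ∧
        trFor A p₀ ζ₀ + t • ((⟪A x, x⟫_ℂ).re - (⟪A (ζ₀ a), ζ₀ a⟫_ℂ).re) = k := by
    obtain ⟨C, hC, hdiff⟩ := exists_isDiffRep_of_transfer x (ζ₀ a)
    have ht : 0 < min (p₀ a) (ε / (C + 1)) :=
      lt_min ((hρ₀.1 a).lt_of_ne' ha) (by positivity)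
    obtain ⟨q, ξ, hq, hqd, hqt⟩ := hρ₀.exists_transfer ha hx1 hx ht.le (min_le_left _ _)
    obtain ⟨m, η, hm, hmη⟩ := hdiff _ ht.le
    refine ⟨_, ht, (hqt A).symm.trans (hW q ξ m η hq (hmη _ _ _ _ hqd) ?_)⟩
    rw [hm]
    calc min (p₀ a) (ε / (C + 1)) * C ≤ ε / (C + 1) * C := by gcongr; exact min_le_right _ _
      _ < ε := by
        rw [div_mul_eq_mul_div, div_lt_iff₀ (by positivity)]
        nlinarith
  have hζK {n} (hn : p₀ n ≠ 0) : ζ₀ n ∈ K ⊔ Kᗮ :=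
    Submodule.mem_sup_left (Submodule.subset_span (Set.mem_image_of_mem ζ₀ hn))
  have hk : trFor A p₀ ζ₀ = k := by
    obtain ⟨t, -, h⟩ := htransfer (ζ₀ a) (hρ₀.2.2.2.norm_eq_one ha) (hζK ha)
    simpa using h
  have hconst (x : H) (hx1 : ‖x‖ = 1) (hx : x ∈ K ⊔ Kᗮ) :
      (⟪A x, x⟫_ℂ).re = (⟪A (ζ₀ a), ζ₀ a⟫_ℂ).re := by
    obtain ⟨t, ht, h⟩ := htransfer x hx1 hx
    rw [hk, add_eq_left, smul_eq_zero] at h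
    exact sub_eq_zero.mp (h.resolve_left ht.ne')
  have hak : (⟪A (ζ₀ a), ζ₀ a⟫_ℂ).re = k := by
    rw [← hk, trFor, ← one_mul (⟪A (ζ₀ a), ζ₀ a⟫_ℂ).re, ← hρ₀.2.2.1, ← tsum_mul_right]
    refine tsum_congr fun n => ?_
    rcases eq_or_ne (p₀ n) 0 with hn | hn
    · simp [hn]
    · rw [hconst (ζ₀ n) (hρ₀.2.2.2.norm_eq_one hn) (hζK hn)]
  have hquad (x : H) (hx : x ∈ K ⊔ Kᗮ) : (⟪A x, x⟫_ℂ).re = k * ‖x‖ ^ 2 := by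
    rcases eq_or_ne x 0 with rfl | hx0
    · simp
    have h := hconst (((‖x‖⁻¹ : ℝ) : ℂ) • x) (by simp [norm_smul, hx0])
      (Submodule.smul_mem _ _ hx)
    rw [hak, map_smul, inner_smul_left, inner_smul_right, Complex.conj_ofReal,
      Complex.re_ofReal_mul, Complex.re_ofReal_mul] at h
    have := norm_ne_zero_iff.mpr hx0
    field_simp at h
    linarith
  have hdense : Dense ((K ⊔ Kᗮ : Submodule ℂ H) : Set H) := by
    rw [Submodule.dense_iff_topologicalClosure_eq_top, Submodule.topologicalClosure_eq_top_iff,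
      ← Submodule.inf_orthogonal, Submodule.inf_orthogonal_eq_bot]
  have hall : (fun x : H => (⟪A x, x⟫_ℂ).re) = fun x => k * ‖x‖ ^ 2 :=
    Continuous.ext_on hdense (by fun_prop) (by fun_prop) hquad
  have hsymm := ContinuousLinearMap.isSelfAdjoint_iff_isSymmetric.mp hA
  apply ContinuousLinearMap.coe_injective
  refine (ext_inner_map _ _).mp fun x => ?_
  have him : ((⟪A x, x⟫_ℂ).re : ℂ) = ⟪A x, x⟫_ℂ := hsymm.coe_re_inner_apply_self x
  have h := congrFun hall x
  rw [ContinuousLinearMap.coe_coe, ← him, h]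
  have hs : ⟪((k : ℂ) • (1 : H →L[ℂ] H) : H →L[ℂ] H) x, x⟫_ℂ = (k : ℂ) * (‖x‖ : ℂ) ^ 2 := by
    rw [smul_apply, one_apply_eq_self, inner_smul_left,
      inner_self_eq_norm_sq_to_K, Complex.conj_ofReal]
    rfl
  rw [ContinuousLinearMap.coe_coe, hs]
  push_cast
  rfl
end
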